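/- Let G = (V,E) be a connected, locally finite, simple graph and let u ∼ v be adjacent vertices. Let N_u be the set of neighbors of u other than v, and N_v the set of neighbors of v other than u. If |N_u| + |N_v| ≥ 3 and d(x, y) ≥ 3 for every x ∈ N_u and y ∈ N_v, then κ(u,v) < 0. -/

import Mathlib

open SimpleGraph

variable {V : Type*}

/-- Combinatorial (unnormalized) graph Laplacian. -/
def lapl (G : SimpleGraph V) [G.LocallyFinite] (f : V → ℝ) (x : V) : ℝ :=
  ∑ y ∈ G.neighborFinset x, (f y - f x)

/-- Lin-Lu-Yau-Ollivier Ricci curvature (limit-free definition):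
`κ(u,v) = inf { Δf(u) − Δf(v) : f 1-Lipschitz w.r.t. graph distance, f v − f u = 1 }`. -/
noncomputable def ricci (G : SimpleGraph V) [G.LocallyFinite] (u v : V) : ℝ :=
  sInf { r : ℝ | ∃ f : V → ℝ,
    (∀ x y : V, |f x - f y| ≤ (G.dist x y : ℝ)) ∧ f v - f u = 1 ∧
    r = lapl G f u - lapl G f v }

/-- Nonnegative Ricci curvature on every edge. -/
def NonnegRicci (G : SimpleGraph V) [G.LocallyFinite] : Prop :=
  ∀ u v : V, G.Adj u v → 0 ≤ ricci G u v

/-! Let `N_u` and `N_v` be the neighborhoods of the endpoints of the edge, without the edge itself.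
Since they are far apart, there is a `1`-Lipschitz function with value `0` at `u`, `1` at `v`,
at most `-1` on `N_u` and at least `2` on `N_v`: take the infimum of `d(·, z) - d(u, z)` over
`z ∈ {u} ∪ N_u`. Its Laplacian is at most `1 - |N_u|` at `u` and at least `|N_v| - 1` at `v`, so
`κ(u,v) ≤ 2 - |N_u| - |N_v|`. -/

/-- `1`-Lipschitz functions for the graph distance, the test functions in the definition of
`ricci`. As `G.dist` is `0` between different components, such a function takes a single value on
a disconnected graph. -/
def IsOneLipschitz (G : SimpleGraph V) (f : V → ℝ) : Prop :=
  ∀ x y : V, |f x - f y| ≤ (G.dist x y : ℝ)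

section IsOneLipschitz

variable {G : SimpleGraph V} {f : V → ℝ}

lemma isOneLipschitz_of_sub_le_dist (h : ∀ x y : V, f x - f y ≤ G.dist x y) :
    IsOneLipschitz G f :=
  fun x y => abs_sub_le_iff.mpr ⟨h x y, G.dist_comm (u := x) ▸ h y x⟩

lemma IsOneLipschitz.sub_le_dist (hf : IsOneLipschitz G f) (x y : V) :
    f x - f y ≤ G.dist x y :=
  (le_abs_self _).trans (hf x y)

lemma IsOneLipschitz.abs_sub_le_one (hf : IsOneLipschitz G f) {x y : V} (hxy : G.Adj x y) :
    |f x - f y| ≤ 1 := by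
  simpa [dist_eq_one_iff_adj.mpr hxy] using hf x y

lemma isOneLipschitz_dist_sub_const (hconn : G.Connected) (z : V) (c : ℝ) :
    IsOneLipschitz G fun x => (G.dist x z : ℝ) - c := by
  refine isOneLipschitz_of_sub_le_dist fun x y => ?_
  have triangle : (G.dist x z : ℝ) ≤ G.dist x y + G.dist y z := mod_cast hconn.dist_triangle
  linarith

lemma IsOneLipschitz.finset_inf' {ι : Type*} {s : Finset ι} (hs : s.Nonempty) {F : ι → V → ℝ}
    (hF : ∀ i ∈ s, IsOneLipschitz G (F i)) :
    IsOneLipschitz G fun x => s.inf' hs fun i => F i x := by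
  refine isOneLipschitz_of_sub_le_dist fun x y => sub_le_comm.mp (Finset.le_inf' _ _ fun i hi => ?_)
  have inf_le : s.inf' hs (fun j => F j x) ≤ F i x := Finset.inf'_le _ hi
  linarith [(hF i hi).sub_le_dist x y]

end IsOneLipschitz

section Laplacian

variable {G : SimpleGraph V} [G.LocallyFinite] {f : V → ℝ} {u v : V}

lemma lapl_eq_sub_add_sum_erase [DecidableEq V] (huv : G.Adj u v) :
    lapl G f u = (f v - f u) + ∑ x ∈ (G.neighborFinset u).erase v, (f x - f u) :=
  (Finset.add_sum_erase _ _ ((G.mem_neighborFinset u v).mpr huv)).symm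

lemma IsOneLipschitz.abs_lapl_le_degree (hf : IsOneLipschitz G f) (x : V) :
    |lapl G f x| ≤ G.degree x := by
  calc |lapl G f x| ≤ ∑ y ∈ G.neighborFinset x, |f y - f x| := Finset.abs_sum_le_sum_abs _ _
    _ ≤ ∑ _y ∈ G.neighborFinset x, (1 : ℝ) := Finset.sum_le_sum fun y hy =>
        hf.abs_sub_le_one ((G.mem_neighborFinset x y).mp hy).symm
    _ = G.degree x := by simp

lemma IsOneLipschitz.ricci_le (hf : IsOneLipschitz G f) (hfuv : f v - f u = 1) :
    ricci G u v ≤ lapl G f u - lapl G f v := by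
  refine csInf_le ⟨-G.degree u - G.degree v, ?_⟩ ⟨f, hf, hfuv, rfl⟩
  rintro r ⟨g, hg : IsOneLipschitz G g, -, rfl⟩
  exact sub_le_sub (neg_le_of_abs_le (hg.abs_lapl_le_degree u))
    (le_of_abs_le (hg.abs_lapl_le_degree v))

lemma IsOneLipschitz.ricci_le_two_sub_card [DecidableEq V] (hf : IsOneLipschitz G f)
    (huv : G.Adj u v) (hfuv : f v - f u = 1)
    (hu : ∀ x ∈ (G.neighborFinset u).erase v, f x - f u ≤ -1)
    (hv : ∀ y ∈ (G.neighborFinset v).erase u, 1 ≤ f y - f v) :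
    ricci G u v ≤
      2 - ((G.neighborFinset u).erase v).card - ((G.neighborFinset v).erase u).card := by
  have sum_le := Finset.sum_le_card_nsmul _ _ _ hu
  have le_sum := Finset.card_nsmul_le_sum _ _ _ hv
  have ricci_le := hf.ricci_le hfuv
  rw [lapl_eq_sub_add_sum_erase huv, lapl_eq_sub_add_sum_erase huv.symm] at ricci_le
  rw [nsmul_eq_mul] at sum_le le_sum
  linarith

end Laplacian

/-- The McShane extension of `-d(u, ·)` from the finite set `s`: on a connected graph, the largest
`1`-Lipschitz function that agrees with `-d(u, ·)` on `s`. It descends as steeply as possible from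
`u` towards each point of `s`. -/
noncomputable def mcShaneNegDist (G : SimpleGraph V) (u : V) (s : Finset V) (hs : s.Nonempty)
    (x : V) : ℝ :=
  s.inf' hs fun z => (G.dist x z : ℝ) - G.dist u z

section McShane

variable {G : SimpleGraph V} {u x z : V} {s : Finset V} (hs : s.Nonempty)

lemma isOneLipschitz_mcShaneNegDist (hconn : G.Connected) :
    IsOneLipschitz G (mcShaneNegDist G u s hs) :=
  .finset_inf' hs fun z _ => isOneLipschitz_dist_sub_const hconn z (G.dist u z)

lemma mcShaneNegDist_self : mcShaneNegDist G u s hs u = 0 := by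
  simp [mcShaneNegDist]

lemma mcShaneNegDist_le (hz : z ∈ s) :
    mcShaneNegDist G u s hs x ≤ G.dist x z - G.dist u z :=
  Finset.inf'_le _ hz

lemma natCast_le_mcShaneNegDist {n : ℕ} (h : ∀ z ∈ s, n + G.dist u z ≤ G.dist x z) :
    (n : ℝ) ≤ mcShaneNegDist G u s hs x :=
  Finset.le_inf' _ _ fun z hz => le_sub_iff_add_le.mpr (mod_cast h z hz)

end McShane

section FarNeighbors

variable [DecidableEq V] {G : SimpleGraph V} [G.LocallyFinite] {u v : V}

lemma two_le_dist_of_far_neighbors (hconn : G.Connected)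
    (hfar : ∀ x ∈ (G.neighborFinset u).erase v, ∀ y ∈ (G.neighborFinset v).erase u,
      3 ≤ G.dist x y) {x : V} (hx : x ∈ (G.neighborFinset u).erase v) :
    2 ≤ G.dist v x := by
  have hux : G.Adj u x := by simpa using Finset.mem_of_mem_erase hx
  refine hconn.one_lt_dist_of_ne_of_not_adj (Finset.ne_of_mem_erase hx).symm fun hvx => ?_
  have hxv : x ∈ (G.neighborFinset v).erase u := by simp [hvx, hux.ne']
  simpa using hfar x hx x hxv

lemma exists_isOneLipschitz_of_far_neighbors (hconn : G.Connected) (huv : G.Adj u v)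
    (hfar : ∀ x ∈ (G.neighborFinset u).erase v, ∀ y ∈ (G.neighborFinset v).erase u,
      3 ≤ G.dist x y) :
    ∃ f : V → ℝ, IsOneLipschitz G f ∧ f u = 0 ∧ f v = 1 ∧
      (∀ x ∈ (G.neighborFinset u).erase v, f x ≤ -1) ∧
      ∀ y ∈ (G.neighborFinset v).erase u, 2 ≤ f y := by
  have hs : (insert u ((G.neighborFinset u).erase v)).Nonempty := Finset.insert_nonempty _ _
  have dist_eq_one : ∀ x ∈ (G.neighborFinset u).erase v, G.dist u x = 1 := fun x hx =>
    dist_eq_one_iff_adj.mpr (by simpa using Finset.mem_of_mem_erase hx)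
  have dist_vu : G.dist v u = 1 := dist_eq_one_iff_adj.mpr huv.symm
  have hfar' : ∀ y ∈ (G.neighborFinset v).erase u, ∀ x ∈ (G.neighborFinset u).erase v,
      3 ≤ G.dist y x := fun y hy x hx => G.dist_comm (u := x) ▸ hfar x hx y hy
  refine ⟨mcShaneNegDist G u _ hs, isOneLipschitz_mcShaneNegDist hs hconn,
    mcShaneNegDist_self hs, le_antisymm ?_ ?_, fun x hx => ?_, fun y hy => ?_⟩
  · simpa [dist_vu] using mcShaneNegDist_le (G := G) (u := u) (x := v) hs
      (Finset.mem_insert_self u _)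
  · refine mod_cast natCast_le_mcShaneNegDist (n := 1) hs
      ((Finset.forall_mem_insert ..).mpr ⟨by simp [dist_vu], fun x hx => ?_⟩)
    simpa [dist_eq_one x hx] using two_le_dist_of_far_neighbors hconn hfar hx
  · simpa [dist_eq_one x hx] using mcShaneNegDist_le (G := G) (u := u) (x := x) hs
      (Finset.mem_insert_of_mem hx)
  · refine mod_cast natCast_le_mcShaneNegDist (n := 2) hs
      ((Finset.forall_mem_insert ..).mpr ⟨?_, fun x hx => ?_⟩)
    · simpa [G.dist_comm] using two_le_dist_of_far_neighbors hconn hfar' hy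
    · simpa [dist_eq_one x hx] using hfar' y hy x hx

lemma ricci_le_two_sub_card_of_far_neighbors (hconn : G.Connected) (huv : G.Adj u v)
    (hfar : ∀ x ∈ (G.neighborFinset u).erase v, ∀ y ∈ (G.neighborFinset v).erase u,
      3 ≤ G.dist x y) :
    ricci G u v ≤
      2 - ((G.neighborFinset u).erase v).card - ((G.neighborFinset v).erase u).card := by
  obtain ⟨f, hf, hfu, hfv, hfNu, hfNv⟩ := exists_isOneLipschitz_of_far_neighbors hconn huv hfar
  refine hf.ricci_le_two_sub_card huv (by linarith) (fun x hx => ?_) fun y hy => ?_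
  · linarith [hfNu x hx]
  · linarith [hfNv y hy]

end FarNeighbors

/-- Let `u ∼ v` in a connected, locally finite simple graph, let `N_u`
be the neighbors of `u` other than `v` and `N_v` the neighbors of `v` other than `u`.
If `|N_u| + |N_v| ≥ 3` and every vertex of `N_u` is at distance at least 3 from every
vertex of `N_v`, then `κ(u,v) < 0`. -/
theorem ricci_neg_of_far_neighbors [DecidableEq V] (G : SimpleGraph V) [G.LocallyFinite]
    (hconn : G.Connected) (u v : V) (huv : G.Adj u v)
    (hcard : 3 ≤ ((G.neighborFinset u).erase v).card + ((G.neighborFinset v).erase u).card)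
    (hfar : ∀ x ∈ (G.neighborFinset u).erase v, ∀ y ∈ (G.neighborFinset v).erase u,
      3 ≤ G.dist x y) :
    ricci G u v < 0 := by
  have ricci_le := ricci_le_two_sub_card_of_far_neighbors hconn huv hfar
  have card_ge : (3 : ℝ) ≤
      ((G.neighborFinset u).erase v).card + ((G.neighborFinset v).erase u).card := mod_cast hcard
  linarith
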